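/- Let b > 0 be real with b² irrational, and let e_b be the noncompact quantum dilogarithm on the strip |Im z| < (b+b⁻¹)/2. Then e_b extends uniquely to a meromorphic function on ℂ which satisfies the two shift equations e_b(z−ib/2) = (1+e^{2πbz})·e_b(z+ib/2) and e_b(z−ib⁻¹/2) = (1+e^{2πb⁻¹z})·e_b(z+ib⁻¹/2); the poles of this extension are exactly the points c_b + i(mb+nb⁻¹) with m,n ∈ ℤ≥0 and are all simple, and its zeros are exactly the points −c_b − i(mb+nb⁻¹) with m,n ∈ ℤ≥0 and are all simple. -/

import Mathlib

open MeasureTheory Complex Real Filter Topology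

noncomputable section

/-- The special point `c_b = i(b+b⁻¹)/2`. -/
def cb (b : ℝ) : ℂ := Complex.I * ((b : ℂ) + (b : ℂ)⁻¹) / 2

/-- The integrand in the integral representation of the noncompact quantum dilogarithm. -/
def ebIntegrand (b ε : ℝ) (z : ℂ) (t : ℝ) : ℂ :=
  Complex.exp (-2 * Complex.I * z * ((t : ℂ) + Complex.I * (ε : ℂ))) /
    (((t : ℂ) + Complex.I * (ε : ℂ)) *
      Complex.sinh ((b : ℂ) * ((t : ℂ) + Complex.I * (ε : ℂ))) *
      Complex.sinh ((b : ℂ)⁻¹ * ((t : ℂ) + Complex.I * (ε : ℂ))))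

/-- The noncompact quantum dilogarithm defined with contour parameter `ε`. -/
def ebE (b ε : ℝ) (z : ℂ) : ℂ :=
  Complex.exp ((1 / 4 : ℂ) * ∫ t : ℝ, ebIntegrand b ε z t)

/-- The noncompact quantum dilogarithm `e_b` (canonical choice of contour parameter). -/
def eb (b : ℝ) (z : ℂ) : ℂ := ebE b (π * min b b⁻¹ / 2) z

/-- The set `{c_b + i(mb + nb⁻¹) : m, n ∈ ℤ≥0}` of poles of the continuation of `e_b`. -/
def ebPoles (b : ℝ) : Set ℂ :=
  {z | ∃ m n : ℕ, z = cb b + Complex.I * ((m : ℂ) * (b : ℂ) + (n : ℂ) * (b : ℂ)⁻¹)}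

/-- The set `{-c_b - i(mb + nb⁻¹) : m, n ∈ ℤ≥0}` of zeros of the continuation of `e_b`. -/
def ebZeros (b : ℝ) : Set ℂ :=
  {z | ∃ m n : ℕ, z = -cb b - Complex.I * ((m : ℂ) * (b : ℂ) + (n : ℂ) * (b : ℂ)⁻¹)}

/-!
Shifting `z` by `±ib/2` multiplies the integrand of `e_b` by `exp(±bw)`, where `w = t + iε`, and the
difference of the two exponentials cancels the factor `sinh(bw)`. The logarithm of
`e_b(z - ib/2) / e_b(z + ib/2)` is therefore an integral with a single hyperbolic sine. Its
derivative in `z` loses the factor `1 / w` as well, and after moving the contour to the height where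
`sinh` becomes `i cosh` it is a Beta integral; this identifies the ratio as `1 + exp(2πbz)`.

The resulting functional equation continues `e_b` strip by strip to all of `ℂ`. Its divisor changes
only through the zeros of `1 + exp(2πbz)`: those in the upper half plane create the poles
`c_b + inb⁻¹`, which the translations by `ib` carry to the remaining ones, and those in the lower
half plane create the zeros in the same way. The equation for `b⁻¹` follows from `e_{b⁻¹} = e_b` and
uniqueness of the continuation. Finally, for irrational `b²` distinct pairs `(m, n)` give distinct
points, so that all poles and zeros are simple.
-/

section Integrals

lemma integrable_exp_neg_mul_abs {c : ℝ} (hc : 0 < c) :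
    Integrable fun t : ℝ => rexp (-c * |t|) := by
  rw [← integrableOn_univ, ← Set.Iic_union_Ioi (a := (0 : ℝ))]
  refine IntegrableOn.union ?_ ?_
  · refine (integrableOn_exp_mul_Iic hc 0).congr_fun (fun t ht => ?_) measurableSet_Iic
    simp only [abs_of_nonpos (Set.mem_Iic.1 ht)]
    ring_nf
  · refine (integrableOn_exp_mul_Ioi (neg_lt_zero.2 hc) 0).congr_fun (fun t ht => ?_)
      measurableSet_Ioi
    simp only [abs_of_pos (Set.mem_Ioi.1 ht)]

lemma tendsto_exp_neg_mul_abs_cocompact {c : ℝ} (hc : 0 < c) :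
    Tendsto (fun t : ℝ => rexp (-c * |t|)) (cocompact ℝ) (𝓝 0) :=
  Real.tendsto_exp_atBot.comp
    ((tendsto_norm_cocompact_atTop (E := ℝ)).const_mul_atTop_of_neg (neg_lt_zero.2 hc))

/-- Only the value at `s` of the exponential weight is assumed integrable: the loss `r * ‖X‖`
dominates both the neighbouring values and the factor `X` of the derivative. -/
lemma hasDerivAt_integral_cexp_mul {α : Type*} [MeasurableSpace α] {μ : Measure α} {X k : α → ℂ}
    (hX : AEStronglyMeasurable X μ) (hk : AEStronglyMeasurable k μ) {s : ℂ} {r : ℝ} (hr : 0 < r)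
    (hint : Integrable (fun t => rexp ((s * X t).re + r * ‖X t‖) * ‖k t‖) μ) :
    HasDerivAt (fun s => ∫ t, cexp (s * X t) * k t ∂μ) (∫ t, X t * cexp (s * X t) * k t ∂μ) s := by
  have hre : ∀ x ∈ Metric.ball s (r / 2), ∀ t,
      (x * X t).re ≤ (s * X t).re + r / 2 * ‖X t‖ := fun x hx t => by
    have hx' : ‖x - s‖ ≤ r / 2 := (mem_ball_iff_norm.1 hx).le
    have hdiff : ((x - s) * X t).re ≤ r / 2 * ‖X t‖ :=
      (re_le_norm _).trans ((norm_mul_le _ _).trans (by gcongr))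
    rw [sub_mul, sub_re] at hdiff
    linarith
  have hmeas : ∀ x : ℂ, AEStronglyMeasurable (fun t => cexp (x * X t) * k t) μ := fun x =>
    (Complex.continuous_exp.comp_aestronglyMeasurable (hX.const_mul x)).mul hk
  have hX_le : ∀ t, ‖X t‖ ≤ 2 / r * rexp (r / 2 * ‖X t‖) := fun t => by
    rw [div_mul_eq_mul_div, le_div_iff₀ hr]
    linarith [Real.add_one_le_exp (r / 2 * ‖X t‖)]
  refine (hasDerivAt_integral_of_dominated_loc_of_deriv_le
    (F := fun x t => cexp (x * X t) * k t) (F' := fun x t => X t * cexp (x * X t) * k t)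
    (bound := fun t => 2 / r * (rexp ((s * X t).re + r * ‖X t‖) * ‖k t‖))
    (Metric.ball_mem_nhds s (half_pos hr)) (Eventually.of_forall hmeas)
    (hint.mono' (hmeas s) (Eventually.of_forall fun t => ?_))
    ?_ (Eventually.of_forall fun t x hx => ?_) (hint.const_mul _)
    (Eventually.of_forall fun t x _ => ?_)).2
  · rw [norm_mul, norm_exp]
    gcongr
    exact le_add_of_nonneg_right (by positivity)
  · simp only [mul_assoc]
    exact hX.mul (hmeas s)
  · calc ‖X t * cexp (x * X t) * k t‖ = ‖X t‖ * rexp (x * X t).re * ‖k t‖ := by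
          rw [norm_mul, norm_mul, norm_exp]
      _ ≤ 2 / r * rexp (r / 2 * ‖X t‖) * rexp ((s * X t).re + r / 2 * ‖X t‖) * ‖k t‖ := by
          gcongr
          exacts [hX_le t, hre x hx t]
      _ = 2 / r * (rexp ((s * X t).re + r * ‖X t‖) * ‖k t‖) := by
          rw [mul_assoc (2 / r), ← Real.exp_add]
          ring_nf
  · simpa only [mul_comm (X t)] using ((hasDerivAt_mul_const (X t)).cexp).mul_const (k t)

variable {ε q : ℝ} {k : ℝ → ℂ} {s : ℂ}

lemma integrable_exp_re_add_norm_mul_norm (hk : AEStronglyMeasurable k)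
    (hdecay : k =O[⊤] fun t => rexp (-q * |t|)) {r : ℝ} (hr : 0 ≤ r) (hs : |s.re| + r < q) :
    Integrable fun t : ℝ => rexp ((s * (t + I * ε)).re + r * ‖t + I * ε‖) * ‖k t‖ := by
  obtain ⟨C, hC⟩ := Asymptotics.isBigO_top.1 hdecay
  refine ((integrable_exp_neg_mul_abs (sub_pos.2 hs)).const_mul
    (C * rexp ((|s.im| + r) * |ε|))).mono' ?_ (Eventually.of_forall fun t => ?_)
  · exact (Continuous.aestronglyMeasurable (by fun_prop)).mul hk.norm
  have hre : (s * (t + I * ε)).re ≤ |s.re| * |t| + |s.im| * |ε| := by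
    have hexpand : (s * (t + I * ε)).re = s.re * t + -(s.im * ε) := by simp; ring
    rw [hexpand, ← abs_mul, ← abs_mul, ← abs_neg (s.im * ε)]
    exact add_le_add (le_abs_self _) (le_abs_self _)
  have hnorm : ‖(t + I * ε : ℂ)‖ ≤ |t| + |ε| := by
    simpa using norm_add_le (t : ℂ) (I * ε)
  calc ‖rexp ((s * (t + I * ε)).re + r * ‖t + I * ε‖) * ‖k t‖‖
      = rexp ((s * (t + I * ε)).re + r * ‖t + I * ε‖) * ‖k t‖ := by
        rw [norm_mul, norm_norm, Real.norm_eq_abs, Real.abs_exp]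
    _ ≤ rexp (|s.re| * |t| + |s.im| * |ε| + r * (|t| + |ε|)) * (C * rexp (-q * |t|)) := by
        gcongr
        simpa using hC t
    _ = C * rexp ((|s.im| + r) * |ε|) * rexp (-(q - (|s.re| + r)) * |t|) := by
        rw [mul_left_comm, ← Real.exp_add, mul_assoc C, ← Real.exp_add]
        ring_nf

lemma integrable_cexp_mul_line (hk : AEStronglyMeasurable k)
    (hdecay : k =O[⊤] fun t => rexp (-q * |t|)) (hs : |s.re| < q) :
    Integrable fun t : ℝ => cexp (s * (t + I * ε)) * k t := by
  refine (integrable_exp_re_add_norm_mul_norm (ε := ε) hk hdecay le_rfl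
    (by simpa using hs)).mono' ?_ (Eventually.of_forall fun t => ?_)
  · exact (Continuous.aestronglyMeasurable (by fun_prop)).mul hk
  · simp [norm_exp]

lemma hasDerivAt_integral_cexp_mul_line (hk : AEStronglyMeasurable k)
    (hdecay : k =O[⊤] fun t => rexp (-q * |t|)) (hs : |s.re| < q) :
    HasDerivAt (fun s => ∫ t : ℝ, cexp (s * (t + I * ε)) * k t)
      (∫ t : ℝ, (t + I * ε) * cexp (s * (t + I * ε)) * k t) s :=
  hasDerivAt_integral_cexp_mul (Continuous.aestronglyMeasurable (by fun_prop)) hk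
    (half_pos (sub_pos.2 hs))
    (integrable_exp_re_add_norm_mul_norm hk hdecay (by linarith) (by linarith))

end Integrals

section ContourShift

variable {E : Type*} [NormedAddCommGroup E] {G : ℂ → E} {g : ℝ → ℝ} {α β : ℝ}

lemma integrable_horizontal_line (hcont : ∀ w : ℂ, w.im ∈ Set.uIcc α β → ContinuousAt G w)
    (hg : Integrable g) (hbound : ∀ w : ℂ, w.im ∈ Set.uIcc α β → ‖G w‖ ≤ g w.re)
    {y : ℝ} (hy : y ∈ Set.uIcc α β) : Integrable fun t : ℝ => G (t + y * I) := by
  have : Continuous fun t : ℝ => G (t + y * I) := continuous_iff_continuousAt.2 fun t =>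
    (hcont _ (by simpa using hy)).comp (f := fun t : ℝ => (t + y * I : ℂ)) (by fun_prop)
  refine hg.mono' this.aestronglyMeasurable (Eventually.of_forall fun t => ?_)
  simpa using hbound (t + y * I) (by simpa using hy)

variable [NormedSpace ℂ E]

lemma tendsto_integral_vertical_segment (hbound : ∀ w : ℂ, w.im ∈ Set.uIcc α β → ‖G w‖ ≤ g w.re)
    {l : Filter ℝ} (hg : Tendsto g l (𝓝 0)) :
    Tendsto (fun T : ℝ => ∫ y in α..β, G (T + y * I)) l (𝓝 0) := by
  refine squeeze_zero_norm (fun T => ?_) (by simpa using hg.mul_const |β - α|)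
  refine intervalIntegral.norm_integral_le_of_norm_le_const fun y hy => ?_
  simpa using hbound (T + y * I) (by simpa using Set.uIoc_subset_uIcc hy)

lemma integral_horizontal_line_eq
    (hdiff : ∀ w : ℂ, w.im ∈ Set.uIcc α β → DifferentiableAt ℂ G w)
    (hg : Integrable g) (hg0 : Tendsto g (cocompact ℝ) (𝓝 0))
    (hbound : ∀ w : ℂ, w.im ∈ Set.uIcc α β → ‖G w‖ ≤ g w.re) :
    ∫ t : ℝ, G (t + α * I) = ∫ t : ℝ, G (t + β * I) := by
  have hhoriz : ∀ y ∈ Set.uIcc α β, Tendsto (fun T : ℝ => ∫ t in (-T)..T, G (t + y * I))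
      atTop (𝓝 (∫ t : ℝ, G (t + y * I))) := fun y hy =>
    intervalIntegral_tendsto_integral
      (integrable_horizontal_line (fun w hw => (hdiff w hw).continuousAt) hg hbound hy)
      tendsto_neg_atTop_atBot tendsto_id
  have hright : Tendsto (fun T : ℝ => I • ∫ y in α..β, G (T + y * I)) atTop (𝓝 0) := by
    simpa using (tendsto_integral_vertical_segment hbound
      (hg0.mono_left atTop_le_cocompact)).const_smul I
  have hleft : Tendsto (fun T : ℝ => I • ∫ y in α..β, G ((-T : ℝ) + y * I)) atTop (𝓝 0) := by
    simpa using ((tendsto_integral_vertical_segment hbound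
      (hg0.mono_left atBot_le_cocompact)).comp tendsto_neg_atTop_atBot).const_smul I
  have hrect : ∀ T : ℝ, (∫ t in (-T)..T, G (t + α * I)) - (∫ t in (-T)..T, G (t + β * I)) +
      I • (∫ y in α..β, G (T + y * I)) - I • (∫ y in α..β, G ((-T : ℝ) + y * I)) = 0 := fun T => by
    have := integral_boundary_rect_eq_zero_of_differentiableOn G
      ((-T : ℝ) + α * I) (T + β * I) fun w hw =>
        (hdiff w (by simpa using hw.2)).differentiableWithinAt
    simpa using this
  have hlim := (((hhoriz α Set.left_mem_uIcc).sub (hhoriz β Set.right_mem_uIcc)).add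
    hright).sub hleft
  simp only [hrect, add_zero, sub_zero] at hlim
  exact sub_eq_zero.1 (tendsto_nhds_unique hlim tendsto_const_nhds)

end ContourShift

section SpecialIntegrals

lemma betaIntegral_eq_integral_sigmoid (u v : ℂ) :
    betaIntegral u v = ∫ t : ℝ, (sigmoid t : ℂ) ^ u * (sigmoid (-t) : ℂ) ^ v := by
  rw [betaIntegral, intervalIntegral.integral_of_le zero_le_one, integral_Ioc_eq_integral_Ioo,
    ← range_sigmoid, ← Set.image_univ, integral_image_eq_integral_abs_deriv_smul
      MeasurableSet.univ (fun x _ => (hasDerivAt_sigmoid x).hasDerivWithinAt)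
      sigmoid_injective.injOn, setIntegral_univ]
  refine integral_congr_ae (Eventually.of_forall fun t => ?_)
  have hpos : 0 < sigmoid t := sigmoid_pos t
  have hpos' : 0 < 1 - sigmoid t := sigmoid_neg t ▸ sigmoid_pos (-t)
  have hne : (sigmoid t : ℂ) ≠ 0 := ofReal_ne_zero.2 hpos.ne'
  have hne' : (1 - sigmoid t : ℂ) ≠ 0 := by exact_mod_cast hpos'.ne'
  simp only [sigmoid_neg, abs_of_pos (mul_pos hpos hpos'), real_smul, cpow_sub _ _ hne,
    cpow_sub _ _ hne', cpow_one]
  push_cast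
  field_simp

lemma sigmoid_cpow_eq_cexp_mul (t : ℝ) (u : ℂ) :
    (sigmoid t : ℂ) ^ u = cexp (u * t) * (sigmoid (-t) : ℂ) ^ u := by
  have hexp : (rexp t : ℂ) ^ u = cexp (u * t) := by
    rw [cpow_def_of_ne_zero (ofReal_ne_zero.2 (Real.exp_ne_zero t)), ← ofReal_log
      (Real.exp_nonneg t), Real.log_exp, mul_comm]
  have hsigmoid : sigmoid t = rexp t * sigmoid (-t) := by
    rw [← sigmoid_mul_rexp_neg, mul_left_comm, ← Real.exp_add, add_neg_cancel, Real.exp_zero,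
      mul_one]
  rw [hsigmoid, ofReal_mul, mul_cpow_ofReal_nonneg (Real.exp_nonneg t) (sigmoid_pos _).le, hexp]

lemma integral_cexp_mul_div_one_add_cexp {u : ℂ} (h0 : 0 < u.re) (h1 : u.re < 1) :
    ∫ t : ℝ, cexp (u * t) / (1 + cexp t) = π / Complex.sin (π * u) := by
  rw [← Complex.Gamma_mul_Gamma_one_sub, Gamma_mul_Gamma_eq_betaIntegral h0 (by simpa using h1),
    add_sub_cancel, Complex.Gamma_one, one_mul, betaIntegral_eq_integral_sigmoid]
  refine integral_congr_ae (Eventually.of_forall fun t => ?_)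
  have hne : (sigmoid (-t) : ℂ) ≠ 0 := ofReal_ne_zero.2 (sigmoid_pos _).ne'
  have hsigmoid : (sigmoid (-t) : ℂ) = (1 + cexp t)⁻¹ := by simp [sigmoid_def]
  dsimp only
  rw [sigmoid_cpow_eq_cexp_mul, mul_assoc, ← cpow_add _ _ hne, add_sub_cancel, cpow_one, hsigmoid,
    div_eq_mul_inv]

lemma integral_cexp_mul_div_cosh {s : ℂ} (hs : |s.re| < 1) :
    ∫ t : ℝ, cexp (s * t) / Complex.cosh t = π / Complex.cos (π * s / 2) := by
  obtain ⟨hs0, hs1⟩ := abs_lt.1 hs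
  have hbeta := integral_cexp_mul_div_one_add_cexp (u := (1 + s) / 2)
    (by simp; linarith) (by simp; linarith)
  have hsin : Complex.sin (π * ((1 + s) / 2)) = Complex.cos (π * s / 2) := by
    rw [show (π * ((1 + s) / 2) : ℂ) = π * s / 2 + π / 2 by ring, Complex.sin_add_pi_div_two]
  have hintegrand (t : ℝ) : cexp (s * t) / Complex.cosh t =
      2 * (cexp ((1 + s) / 2 * ((2 * t : ℝ) : ℂ)) / (1 + cexp ((2 * t : ℝ) : ℂ))) := by
    have hnum : cexp ((1 + s) / 2 * ((2 * t : ℝ) : ℂ)) = cexp (s * t) * cexp t := by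
      rw [← Complex.exp_add]; push_cast; ring_nf
    have hden : 1 + cexp ((2 * t : ℝ) : ℂ) = 2 * Complex.cosh t * cexp t := by
      rw [two_cosh, add_mul, ← Complex.exp_add, ← Complex.exp_add, neg_add_cancel,
        Complex.exp_zero, add_comm]
      push_cast
      ring_nf
    rw [hnum, hden, mul_div_mul_right _ _ (Complex.exp_ne_zero _)]
    field_simp
  simp only [hintegrand]
  rw [integral_const_mul, Measure.integral_comp_mul_left
    (fun t : ℝ => cexp ((1 + s) / 2 * t) / (1 + cexp t)), hbeta, hsin, abs_of_pos (by positivity),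
    real_smul]
  push_cast
  ring

end SpecialIntegrals

section Sinh

lemma exp_abs_div_two_le_cosh (x : ℝ) : rexp |x| / 2 ≤ Real.cosh x := by
  rw [← Real.cosh_abs, Real.cosh_eq]
  linarith [Real.exp_pos (-|x|)]

lemma im_sinh (w : ℂ) : (Complex.sinh w).im = Real.cosh w.re * Real.sin w.im := by
  conv_lhs => rw [← re_add_im w, Complex.sinh_add, cosh_mul_I, sinh_mul_I, ← ofReal_sinh,
    ← ofReal_cosh, ← ofReal_cos, ← ofReal_sin, ← mul_assoc]
  simp [-ofReal_sin]

lemma abs_sin_im_mul_exp_abs_re_le_norm_sinh (w : ℂ) :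
    |Real.sin w.im| * (rexp |w.re| / 2) ≤ ‖Complex.sinh w‖ :=
  calc |Real.sin w.im| * (rexp |w.re| / 2) ≤ |Real.sin w.im| * Real.cosh w.re := by
        gcongr
        exact exp_abs_div_two_le_cosh _
    _ = |(Complex.sinh w).im| := by
        rw [im_sinh, abs_mul, abs_of_pos (Real.cosh_pos _), mul_comm]
    _ ≤ ‖Complex.sinh w‖ := abs_im_le_norm _

lemma sinh_ne_zero_of_im_mem_Ioo {w : ℂ} (hw : w.im ∈ Set.Ioo 0 π) : Complex.sinh w ≠ 0 := fun h =>
  (mul_pos (Real.cosh_pos w.re) (sin_pos_of_mem_Ioo hw)).ne' (by simpa [h] using (im_sinh w).symm)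

lemma norm_inv_sinh_le {w : ℂ} {m : ℝ} (hm : 0 < m) (hw : m ≤ Real.sin w.im) :
    ‖(Complex.sinh w)⁻¹‖ ≤ 2 / m * rexp (-|w.re|) := by
  have hlower : m * (rexp |w.re| / 2) ≤ ‖Complex.sinh w‖ :=
    (mul_le_mul_of_nonneg_right (hw.trans (le_abs_self _)) (by positivity)).trans
      (abs_sin_im_mul_exp_abs_re_le_norm_sinh w)
  calc ‖(Complex.sinh w)⁻¹‖ ≤ (m * (rexp |w.re| / 2))⁻¹ := by
        rw [norm_inv]
        exact inv_anti₀ (by positivity) hlower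
    _ = 2 / m * rexp (-|w.re|) := by
        rw [Real.exp_neg]
        field_simp

lemma isBigO_inv_sinh_line {a ε : ℝ} (ha : 0 < a) (hε : 0 < ε) (haε : a * ε < π) :
    (fun t : ℝ => (Complex.sinh (a * (t + I * ε)))⁻¹) =O[⊤] fun t => rexp (-a * |t|) := by
  have hsin : 0 < Real.sin (a * ε) := sin_pos_of_pos_of_lt_pi (by positivity) haε
  refine Asymptotics.isBigO_top.2 ⟨2 / Real.sin (a * ε), fun t => ?_⟩
  simpa [abs_mul, abs_of_pos ha] using
    norm_inv_sinh_le (w := a * (t + I * ε)) hsin (by simp)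

lemma isBigO_inv_line {ε : ℝ} (hε : 0 < ε) :
    (fun t : ℝ => ((t : ℂ) + I * ε)⁻¹) =O[⊤] fun _ => (1 : ℝ) := by
  refine Asymptotics.isBigO_top.2 ⟨ε⁻¹, fun t => ?_⟩
  have him : ε ≤ ‖(t : ℂ) + I * ε‖ := by simpa using im_le_norm ((t : ℂ) + I * ε)
  simpa using inv_anti₀ hε him

end Sinh

section NormalizedIntegral

variable {θ : ℝ} {s : ℂ}

lemma uIcc_pi_div_two_subset_Ioo (hθ : θ ∈ Set.Ioo 0 π) : Set.uIcc θ (π / 2) ⊆ Set.Ioo 0 π :=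
  Set.ordConnected_Ioo.uIcc_subset hθ ⟨by positivity, by linarith [pi_pos]⟩

lemma sin_le_sin_of_mem_uIcc_pi_div_two {y : ℝ} (hθ : θ ∈ Set.Ioo 0 π)
    (hy : y ∈ Set.uIcc θ (π / 2)) : Real.sin θ ≤ Real.sin y := by
  have := strictConcaveOn_sin_Icc.concaveOn.min_le_of_mem_segment (Set.Ioo_subset_Icc_self hθ)
    (y := π / 2) (z := y) ⟨by positivity, by linarith [pi_pos]⟩ (segment_eq_uIcc θ _ ▸ hy)
  rwa [Real.sin_pi_div_two, min_eq_left (sin_le_one θ)] at this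

lemma norm_cexp_mul_inv_sinh_le {w : ℂ} (hθ : θ ∈ Set.Ioo 0 π)
    (hw : w.im ∈ Set.uIcc θ (π / 2)) : ‖cexp (s * w) * (Complex.sinh w)⁻¹‖ ≤
      rexp (|s.im| * π) * (2 / Real.sin θ) * rexp (-(1 - |s.re|) * |w.re|) := by
  obtain ⟨him0, him1⟩ := uIcc_pi_div_two_subset_Ioo hθ hw
  have hre : (s * w).re ≤ |s.re| * |w.re| + |s.im| * π := by
    have him : |s.im * w.im| ≤ |s.im| * π := by
      rw [abs_mul, abs_of_pos him0]
      gcongr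
    rw [mul_re, ← abs_mul]
    linarith [le_abs_self (s.re * w.re), neg_abs_le (s.im * w.im)]
  calc ‖cexp (s * w) * (Complex.sinh w)⁻¹‖
      ≤ rexp (|s.re| * |w.re| + |s.im| * π) * (2 / Real.sin θ * rexp (-|w.re|)) := by
        rw [norm_mul, norm_exp]
        gcongr
        exact norm_inv_sinh_le (sin_pos_of_mem_Ioo hθ) (sin_le_sin_of_mem_uIcc_pi_div_two hθ hw)
    _ = rexp (|s.im| * π) * (2 / Real.sin θ) * rexp (-(1 - |s.re|) * |w.re|) := by
        rw [Real.exp_add, show -(1 - |s.re|) * |w.re| = |s.re| * |w.re| + -|w.re| by ring,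
          Real.exp_add]
        ring

lemma integral_cexp_mul_inv_sinh_line_eq_integral_pi_div_two (hθ : θ ∈ Set.Ioo 0 π)
    (hs : |s.re| < 1) :
    ∫ t : ℝ, cexp (s * (t + I * θ)) * (Complex.sinh (t + I * θ))⁻¹ =
      ∫ t : ℝ, cexp (s * (t + (π / 2 : ℝ) * I)) * (Complex.sinh (t + (π / 2 : ℝ) * I))⁻¹ := by
  have hdiff : ∀ w : ℂ, w.im ∈ Set.uIcc θ (π / 2) →
      DifferentiableAt ℂ (fun w => cexp (s * w) * (Complex.sinh w)⁻¹) w := fun w hw =>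
    DifferentiableAt.mul (by fun_prop) (DifferentiableAt.inv (by fun_prop)
      (sinh_ne_zero_of_im_mem_Ioo (uIcc_pi_div_two_subset_Ioo hθ hw)))
  simp only [mul_comm I (θ : ℂ)]
  exact integral_horizontal_line_eq hdiff
    ((integrable_exp_neg_mul_abs (sub_pos.2 hs)).const_mul _)
    (by simpa only [mul_zero] using
      (tendsto_exp_neg_mul_abs_cocompact (sub_pos.2 hs)).const_mul _)
    (fun _ => norm_cexp_mul_inv_sinh_le hθ)

lemma one_add_cexp_I_mul_pi_mul (s : ℂ) :
    1 + cexp (I * π * s) = 2 * Complex.cos (π * s / 2) * cexp (I * π * s / 2) := by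
  rw [two_cos, add_mul, ← Complex.exp_add, ← Complex.exp_add]
  ring_nf
  simp [add_comm]

lemma integral_cexp_mul_inv_sinh_line (hθ : θ ∈ Set.Ioo 0 π) (hs : |s.re| < 1) :
    ∫ t : ℝ, cexp (s * (t + I * θ)) * (Complex.sinh (t + I * θ))⁻¹ =
      -2 * (I * π * cexp (I * π * s) / (1 + cexp (I * π * s))) := by
  have hsinh (t : ℝ) : Complex.sinh (t + (π / 2 : ℝ) * I) = I * Complex.cosh t := by
    push_cast
    rw [Complex.sinh_add, sinh_mul_I, cosh_mul_I, Complex.sin_pi_div_two, Complex.cos_pi_div_two]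
    ring
  have hline (t : ℝ) : cexp (s * (t + (π / 2 : ℝ) * I)) * (Complex.sinh (t + (π / 2 : ℝ) * I))⁻¹ =
      -I * cexp (I * π * s / 2) * (cexp (s * t) / Complex.cosh t) := by
    have hexponent : s * (t + (π / 2 : ℝ) * I) = I * π * s / 2 + s * t := by
      push_cast
      ring
    rw [hsinh, mul_inv, inv_I, hexponent, Complex.exp_add]
    ring
  rw [integral_cexp_mul_inv_sinh_line_eq_integral_pi_div_two hθ hs]
  simp only [hline]
  have hsq : cexp (I * π * s) = cexp (I * π * s / 2) ^ 2 := by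
    rw [← Complex.exp_nat_mul]
    ring_nf
  rw [integral_const_mul, integral_cexp_mul_div_cosh hs, one_add_cexp_I_mul_pi_mul, hsq]
  field_simp

/-- The integral whose exponential computes the ratio `e_b(z - ib/2) / e_b(z + ib/2)`, rescaled so
that only one hyperbolic sine, of period `2πi`, remains. -/
def shiftIntegral (θ : ℝ) (s : ℂ) : ℂ :=
  ∫ t : ℝ, cexp (s * (t + I * θ)) * ((t + I * θ) * Complex.sinh (t + I * θ))⁻¹

lemma line_ne_zero (hθ : θ ≠ 0) (t : ℝ) : (t + I * θ : ℂ) ≠ 0 := fun h =>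
  hθ (by simpa using congrArg im h)

lemma aestronglyMeasurable_inv_line_mul_sinh_line :
    AEStronglyMeasurable fun t : ℝ => ((t + I * θ) * Complex.sinh (t + I * θ))⁻¹ :=
  Measurable.aestronglyMeasurable (by fun_prop)

lemma isBigO_inv_line_mul_sinh_line (hθ : θ ∈ Set.Ioo 0 π) :
    (fun t : ℝ => ((t + I * θ) * Complex.sinh (t + I * θ))⁻¹) =O[⊤] fun t => rexp (-1 * |t|) := by
  simpa only [mul_inv, one_mul, ofReal_one] using
    (isBigO_inv_line hθ.1).mul (isBigO_inv_sinh_line one_pos hθ.1 (by simpa using hθ.2))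

lemma hasDerivAt_shiftIntegral (hθ : θ ∈ Set.Ioo 0 π) (hs : |s.re| < 1) :
    HasDerivAt (shiftIntegral θ)
      (-2 * (I * π * cexp (I * π * s) / (1 + cexp (I * π * s)))) s := by
  refine (hasDerivAt_integral_cexp_mul_line aestronglyMeasurable_inv_line_mul_sinh_line
    (isBigO_inv_line_mul_sinh_line hθ) hs).congr_deriv ?_
  rw [← integral_cexp_mul_inv_sinh_line hθ hs]
  refine integral_congr_ae (Eventually.of_forall fun t => ?_)
  have := line_ne_zero hθ.1.ne' t
  simp only [mul_inv]
  field_simp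

lemma cos_pi_mul_div_two_ne_zero (hs : |s.re| < 1) : Complex.cos (π * s / 2) ≠ 0 := by
  obtain ⟨hs0, hs1⟩ := abs_lt.1 hs
  rw [Ne, Complex.cos_eq_zero_iff]
  rintro ⟨k, hk⟩
  have hk' : π * s = π * (2 * k + 1) := by linear_combination 2 * hk
  have hre : s.re = 2 * k + 1 := by
    simpa using congrArg re (mul_left_cancel₀ (ofReal_ne_zero.2 pi_ne_zero) hk')
  rw [hre] at hs0 hs1
  have hlower : (-1 : ℤ) < k := by exact_mod_cast (by linarith : (-1 : ℝ) < k)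
  have hupper : k < 0 := by exact_mod_cast (by linarith : (k : ℝ) < 0)
  lia

lemma tendsto_shiftIntegral_I_mul_atTop (hθ : 0 < θ) :
    Tendsto (fun y : ℝ => shiftIntegral θ (I * y)) atTop (𝓝 0) := by
  refine squeeze_zero_norm (a := fun y : ℝ =>
    rexp (-θ * y) * ∫ t : ℝ, ‖((t + I * θ) * Complex.sinh (t + I * θ))⁻¹‖) (fun y => ?_) ?_
  · refine (norm_integral_le_integral_norm _).trans_eq ?_
    rw [← integral_const_mul]
    refine integral_congr_ae (Eventually.of_forall fun t => ?_)
    simp [norm_exp, mul_comm]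
  · have hexp : Tendsto (fun y => rexp (-θ * y)) atTop (𝓝 0) :=
      Real.tendsto_exp_atBot.comp (tendsto_id.const_mul_atTop_of_neg (neg_lt_zero.2 hθ))
    simpa using hexp.mul_const _

lemma tendsto_one_add_cexp_I_mul_pi_mul_I_mul_atTop :
    Tendsto (fun y : ℝ => 1 + cexp (I * π * (I * y))) atTop (𝓝 1) := by
  have hexp : Tendsto (fun y => rexp (-π * y)) atTop (𝓝 0) :=
    Real.tendsto_exp_atBot.comp (tendsto_id.const_mul_atTop_of_neg (neg_lt_zero.2 pi_pos))
  have hline (y : ℝ) : 1 + cexp (I * π * (I * y)) = 1 + (rexp (-π * y) : ℝ) := by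
    push_cast
    rw [show I * π * (I * y) = -π * y by linear_combination π * y * I_mul_I]
  simp only [hline]
  simpa using (continuous_ofReal.continuousAt.tendsto.comp hexp).const_add (1 : ℂ)

/-- Both sides have the same logarithmic derivative on the strip, and both tend to `1` as
`s → i∞`. -/
lemma cexp_neg_shiftIntegral_div_two (hθ : θ ∈ Set.Ioo 0 π) (hs : |s.re| < 1) :
    cexp (-shiftIntegral θ s / 2) = 1 + cexp (I * π * s) := by
  have hne : ∀ {w : ℂ}, |w.re| < 1 → 1 + cexp (I * π * w) ≠ 0 := fun hw => by
    rw [one_add_cexp_I_mul_pi_mul]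
    simp [cos_pi_mul_div_two_ne_zero hw]
  let H : ℂ → ℂ := fun w => cexp (-shiftIntegral θ w / 2) / (1 + cexp (I * π * w))
  let S : Set ℂ := re ⁻¹' Set.Ioo (-1) 1
  have hS : ∀ {w}, w ∈ S ↔ |w.re| < 1 := abs_lt.symm
  have hderiv : ∀ w ∈ S, HasDerivAt H 0 w := fun w hw => by
    have hw := hS.1 hw
    refine (((hasDerivAt_shiftIntegral hθ hw).neg.div_const 2).cexp.div
      (((hasDerivAt_id w).const_mul (I * π)).cexp.const_add 1) (hne hw)).congr_deriv ?_
    have := hne hw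
    simp only [id, Pi.neg_apply]
    field_simp
    ring
  have hconst : ∀ {w w'}, w ∈ S → w' ∈ S → H w = H w' := fun hw hw' =>
    (isOpen_Ioo.preimage continuous_re).is_const_of_deriv_eq_zero
      ((convex_Ioo (-1 : ℝ) 1).linear_preimage reLm).isPreconnected
      (fun w hw => (hderiv w hw).differentiableAt.differentiableWithinAt)
      (fun w hw => (hderiv w hw).deriv) hw hw'
  have hlim : Tendsto (fun y : ℝ => H (I * y)) atTop (𝓝 1) := by
    have hnum := (Complex.continuous_exp.tendsto _).comp
      ((tendsto_shiftIntegral_I_mul_atTop hθ.1).neg.div_const 2)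
    simpa [Function.comp_def, Pi.div_def, H] using
      hnum.div tendsto_one_add_cexp_I_mul_pi_mul_I_mul_atTop one_ne_zero
  have hH : H s = 1 := tendsto_nhds_unique tendsto_const_nhds
    (hlim.congr fun y => hconst (hS.2 (by simp)) (hS.2 hs))
  exact (div_eq_one_iff_eq (hne hs)).1 hH

end NormalizedIntegral

/-- The ratio `e_b(z - ib/2) / e_b(z + ib/2)`. -/
def ebShiftFactor (b : ℝ) (z : ℂ) : ℂ := 1 + cexp (2 * π * b * z)

section QuantumDilogarithm

variable {b ε : ℝ} {z : ℂ}

/-- The part of the integrand of `e_b` that does not depend on `z`. -/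
def ebKernel (b ε t : ℝ) : ℂ :=
  ((t + I * ε) * Complex.sinh (b * (t + I * ε)) * Complex.sinh ((b : ℂ)⁻¹ * (t + I * ε)))⁻¹

lemma ebIntegrand_eq_cexp_mul_ebKernel (b ε : ℝ) (z : ℂ) (t : ℝ) :
    ebIntegrand b ε z t = cexp (-2 * I * z * (t + I * ε)) * ebKernel b ε t :=
  div_eq_mul_inv _ _

lemma aestronglyMeasurable_ebKernel : AEStronglyMeasurable (ebKernel b ε) :=
  Measurable.aestronglyMeasurable (by unfold ebKernel; fun_prop)

lemma isBigO_ebKernel (hb : 0 < b) (hε : 0 < ε) (hbε : b * ε < π) (hbε' : b⁻¹ * ε < π) :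
    ebKernel b ε =O[⊤] fun t => rexp (-(b + b⁻¹) * |t|) := by
  have hprod := ((isBigO_inv_line hε).mul (isBigO_inv_sinh_line hb hε hbε)).mul
    (isBigO_inv_sinh_line (inv_pos.2 hb) hε hbε')
  refine (hprod.congr_left fun t => ?_).congr_right fun t => ?_
  · simp only [ebKernel, mul_inv, ofReal_inv]
  · rw [one_mul, ← Real.exp_add]
    ring_nf

lemma abs_re_neg_two_I_mul (z : ℂ) : |(-2 * I * z).re| = 2 * |z.im| := by
  simp [abs_mul]

lemma integrable_ebIntegrand (hb : 0 < b) (hε : 0 < ε) (hbε : b * ε < π) (hbε' : b⁻¹ * ε < π)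
    (hz : |z.im| < (b + b⁻¹) / 2) : Integrable (ebIntegrand b ε z) := by
  simp only [funext (ebIntegrand_eq_cexp_mul_ebKernel b ε z)]
  exact integrable_cexp_mul_line aestronglyMeasurable_ebKernel (isBigO_ebKernel hb hε hbε hbε')
    (by rw [abs_re_neg_two_I_mul]; linarith)

lemma differentiableAt_ebE (hb : 0 < b) (hε : 0 < ε) (hbε : b * ε < π) (hbε' : b⁻¹ * ε < π)
    (hz : |z.im| < (b + b⁻¹) / 2) : DifferentiableAt ℂ (ebE b ε) z := by
  have hint := (hasDerivAt_integral_cexp_mul_line (s := -2 * I * z) (ε := ε)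
    aestronglyMeasurable_ebKernel (isBigO_ebKernel hb hε hbε hbε')
    (by rw [abs_re_neg_two_I_mul]; linarith)).differentiableAt.comp z
    (differentiableAt_id.const_mul (-2 * I))
  unfold ebE
  simp only [ebIntegrand_eq_cexp_mul_ebKernel]
  exact (hint.const_mul _).cexp

lemma ebIntegrand_sub_ebIntegrand (hbε : b * ε ∈ Set.Ioo 0 π) (z : ℂ) (t : ℝ) :
    ebIntegrand b ε (z - I * b / 2) t - ebIntegrand b ε (z + I * b / 2) t =
      -2 * (cexp (-2 * I * z * (t + I * ε)) *
        ((t + I * ε) * Complex.sinh ((b : ℂ)⁻¹ * (t + I * ε)))⁻¹) := by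
  have hsinh : Complex.sinh (b * (t + I * ε)) ≠ 0 :=
    sinh_ne_zero_of_im_mem_Ioo (by simpa using hbε)
  simp only [ebIntegrand_eq_cexp_mul_ebKernel, ebKernel, mul_inv]
  generalize (t + I * ε : ℂ) = w at *
  have hsub : cexp (-2 * I * (z - I * b / 2) * w) = cexp (-2 * I * z * w) * cexp (-(b * w)) := by
    rw [← Complex.exp_add]
    congr 1
    linear_combination b * w * I_sq
  have hadd : cexp (-2 * I * (z + I * b / 2) * w) = cexp (-2 * I * z * w) * cexp (b * w) := by
    rw [← Complex.exp_add]
    congr 1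
    linear_combination -b * w * I_sq
  have hdiff : cexp (-(b * w)) - cexp (b * w) = -2 * Complex.sinh (b * w) := by
    rw [neg_mul, two_sinh, neg_sub]
  rw [hsub, hadd, ← sub_mul, ← mul_sub, hdiff]
  rw [← mul_inv_cancel_left₀ hsinh (w⁻¹ * (Complex.sinh ((b : ℂ)⁻¹ * w))⁻¹)]
  ring

lemma integral_cexp_mul_inv_line_mul_sinh_inv (hb : 0 < b) (z : ℂ) :
    ∫ t : ℝ, cexp (-2 * I * z * (t + I * ε)) *
        ((t + I * ε) * Complex.sinh ((b : ℂ)⁻¹ * (t + I * ε)))⁻¹ =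
      shiftIntegral (b⁻¹ * ε) (-2 * I * z * b) := by
  have hbc : (b : ℂ) ≠ 0 := ofReal_ne_zero.2 hb.ne'
  have hscale := Measure.integral_comp_mul_left (fun t : ℝ => cexp (-2 * I * z * b *
    (t + I * (b⁻¹ * ε : ℝ))) * ((t + I * (b⁻¹ * ε : ℝ)) *
      Complex.sinh (t + I * (b⁻¹ * ε : ℝ)))⁻¹) b⁻¹
  have hline (t : ℝ) : ((b⁻¹ * t : ℝ) : ℂ) + I * (b⁻¹ * ε : ℝ) = (b : ℂ)⁻¹ * (t + I * ε) := by
    push_cast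
    ring
  have hexponent (w : ℂ) : -2 * I * z * b * ((b : ℂ)⁻¹ * w) = -2 * I * z * w := by
    field_simp
  have hkernel (w : ℂ) : ((b : ℂ)⁻¹ * w * Complex.sinh ((b : ℂ)⁻¹ * w))⁻¹ =
      b * (w * Complex.sinh ((b : ℂ)⁻¹ * w))⁻¹ := by
    rw [mul_assoc, mul_inv, inv_inv]
  simp only [hline, hexponent, hkernel, mul_left_comm _ (b : ℂ), integral_const_mul, inv_inv,
    abs_of_pos hb, real_smul] at hscale
  exact mul_left_cancel₀ hbc hscale

lemma ebE_shift (hb : 0 < b) (hε : 0 < ε) (hbε : b * ε < π) (hbε' : b⁻¹ * ε < π)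
    (hz : |z.im| < b⁻¹ / 2) :
    ebE b ε (z - I * b / 2) = ebShiftFactor b z * ebE b ε (z + I * b / 2) := by
  have him : (I * b / 2 : ℂ).im = b / 2 := by simp
  obtain ⟨hz0, hz1⟩ := abs_lt.1 hz
  have hint : (∫ t, ebIntegrand b ε (z - I * b / 2) t) - ∫ t, ebIntegrand b ε (z + I * b / 2) t =
      -2 * shiftIntegral (b⁻¹ * ε) (-2 * I * z * b) := by
    rw [← integral_sub (integrable_ebIntegrand hb hε hbε hbε'
        (by rw [sub_im, him, abs_lt]; constructor <;> linarith))
      (integrable_ebIntegrand hb hε hbε hbε'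
        (by rw [add_im, him, abs_lt]; constructor <;> linarith))]
    simp only [ebIntegrand_sub_ebIntegrand ⟨by positivity, hbε⟩]
    rw [integral_const_mul, integral_cexp_mul_inv_line_mul_sinh_inv hb]
  have hs : |(-2 * I * z * b).re| < 1 := by
    rw [mul_assoc, abs_re_neg_two_I_mul, im_mul_ofReal, abs_mul, abs_of_pos hb]
    calc 2 * (|z.im| * b) < 2 * (b⁻¹ / 2 * b) := by gcongr
      _ = 1 := by field_simp
  have hfactor : ebShiftFactor b z = cexp (-shiftIntegral (b⁻¹ * ε) (-2 * I * z * b) / 2) := by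
    rw [cexp_neg_shiftIntegral_div_two ⟨by positivity, hbε'⟩ hs, ebShiftFactor]
    congr 2
    linear_combination 2 * π * z * b * I_sq
  rw [ebE, ebE, hfactor, ← Complex.exp_add]
  congr 1
  linear_combination hint / 4

lemma eb_contour_bounds (hb : 0 < b) :
    0 < π * min b b⁻¹ / 2 ∧ b * (π * min b b⁻¹ / 2) < π ∧ b⁻¹ * (π * min b b⁻¹ / 2) < π := by
  have hinv : 0 < b⁻¹ := inv_pos.2 hb
  have hmul : b * b⁻¹ = 1 := mul_inv_cancel₀ hb.ne'
  have hle : b * min b b⁻¹ ≤ 1 := (mul_le_mul_of_nonneg_left (min_le_right _ _) hb.le).trans_eq hmul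
  have hle' : b⁻¹ * min b b⁻¹ ≤ 1 :=
    (mul_le_mul_of_nonneg_left (min_le_left _ _) hinv.le).trans_eq (by rw [mul_comm, hmul])
  refine ⟨by positivity, ?_, ?_⟩ <;> nlinarith [pi_pos]

lemma eb_ne_zero (b : ℝ) (z : ℂ) : eb b z ≠ 0 := Complex.exp_ne_zero _

lemma isOpen_strip (r : ℝ) : IsOpen {z : ℂ | |z.im| < r} :=
  isOpen_lt (by fun_prop) continuous_const

lemma analyticAt_eb (hb : 0 < b) (hz : |z.im| < (b + b⁻¹) / 2) : AnalyticAt ℂ (eb b) z := by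
  obtain ⟨hε, hbε, hbε'⟩ := eb_contour_bounds hb
  have hdiff : DifferentiableOn ℂ (eb b) {z | |z.im| < (b + b⁻¹) / 2} := fun w hw =>
    (differentiableAt_ebE hb hε hbε hbε' hw).differentiableWithinAt
  exact hdiff.analyticAt ((isOpen_strip _).mem_nhds hz)

lemma eb_shift (hb : 0 < b) (hz : |z.im| < b⁻¹ / 2) :
    eb b (z - I * b / 2) = ebShiftFactor b z * eb b (z + I * b / 2) := by
  obtain ⟨hε, hbε, hbε'⟩ := eb_contour_bounds hb
  exact ebE_shift hb hε hbε hbε' hz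

lemma eb_inv (b : ℝ) : eb b⁻¹ = eb b := by
  ext z
  simp only [eb, ebE, ebIntegrand, ofReal_inv, inv_inv, min_comm b⁻¹ b]
  congr 3
  ext t
  ring

end QuantumDilogarithm

section Multiplicities

variable {b : ℝ} {z : ℂ}

/-- The point `c_b + i(mb + nb⁻¹)` for `p = (m, n)`. -/
def ebPole (b : ℝ) (p : ℕ × ℕ) : ℂ := cb b + I * (p.1 * b + p.2 * (b : ℂ)⁻¹)

/-- The number of pairs `(m, n)` with `z = c_b + i(mb + nb⁻¹)`. It is the order of the pole `z` of
`e_b`, and exceeds `1` at some `z` exactly when `b²` is rational. -/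
def ebMultiplicity (b : ℝ) (z : ℂ) : ℕ := (ebPole b ⁻¹' {z}).ncard

lemma ebPoles_eq_range (b : ℝ) : ebPoles b = Set.range (ebPole b) := by
  ext z
  simp [ebPoles, ebPole, eq_comm]

lemma countable_ebPoles (b : ℝ) : (ebPoles b).Countable :=
  ebPoles_eq_range b ▸ Set.countable_range _

lemma mem_ebZeros_iff_neg_mem_ebPoles : z ∈ ebZeros b ↔ -z ∈ ebPoles b := by
  refine exists_congr fun m => exists_congr fun n => ?_
  rw [neg_eq_iff_eq_neg, neg_add']

lemma ebPoles_inv (b : ℝ) : ebPoles b⁻¹ = ebPoles b := by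
  ext z
  refine exists_comm.trans (exists_congr fun m => exists_congr fun n => ?_)
  simp only [cb, ofReal_inv, inv_inv, add_comm]

lemma ebPole_eq (b : ℝ) (p : ℕ × ℕ) :
    ebPole b p = (((p.1 + 1 / 2) * b + (p.2 + 1 / 2) * b⁻¹ : ℝ) : ℂ) * I := by
  simp only [ebPole, cb]
  push_cast
  ring

lemma im_ebPole (b : ℝ) (p : ℕ × ℕ) :
    (ebPole b p).im = (p.1 + 1 / 2) * b + (p.2 + 1 / 2) * b⁻¹ := by
  rw [ebPole_eq, im_ofReal_mul, I_im, mul_one]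

lemma le_im_of_mem_ebPoles (hb : 0 < b) (hz : z ∈ ebPoles b) : (b + b⁻¹) / 2 ≤ z.im := by
  obtain ⟨p, rfl⟩ := ebPoles_eq_range b ▸ hz
  have hm : 0 ≤ p.1 * b := by positivity
  have hn : 0 ≤ p.2 * b⁻¹ := by positivity
  rw [im_ebPole]
  linarith

lemma notMem_ebPoles_of_abs_im_lt (hb : 0 < b) (hz : |z.im| < (b + b⁻¹) / 2) : z ∉ ebPoles b :=
  fun hp => (le_im_of_mem_ebPoles hb hp).not_gt ((le_abs_self _).trans_lt hz)

lemma notMem_ebPoles_of_mem_ebZeros (hb : 0 < b) (hz : z ∈ ebZeros b) : z ∉ ebPoles b := by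
  intro hp
  have hneg := le_im_of_mem_ebPoles hb (mem_ebZeros_iff_neg_mem_ebPoles.1 hz)
  have hpos := le_im_of_mem_ebPoles hb hp
  rw [neg_im] at hneg
  linarith [inv_pos.2 hb]

lemma ebPole_preimage_singleton_finite (hb : 0 < b) (z : ℂ) : (ebPole b ⁻¹' {z}).Finite := by
  refine ((Set.finite_Iic ⌊z.im * b⁻¹⌋₊).prod (Set.finite_Iic ⌊z.im * b⌋₊)).subset ?_
  rintro ⟨m, n⟩ rfl
  have hmul : b * b⁻¹ = 1 := mul_inv_cancel₀ hb.ne'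
  simp only [Set.mem_prod, Set.mem_Iic, im_ebPole]
  refine ⟨Nat.le_floor ?_, Nat.le_floor ?_⟩
  · have : 0 ≤ 1 / 2 + (n + 1 / 2) * (b⁻¹ * b⁻¹) := by positivity
    linear_combination this - (m + 1 / 2 : ℝ) * hmul
  · have : 0 ≤ 1 / 2 + (m + 1 / 2) * (b * b) := by positivity
    linear_combination this - (n + 1 / 2 : ℝ) * hmul

lemma ebMultiplicity_ne_zero_iff (hb : 0 < b) : ebMultiplicity b z ≠ 0 ↔ z ∈ ebPoles b := by
  rw [ebMultiplicity, ← pos_iff_ne_zero, Set.ncard_pos (ebPole_preimage_singleton_finite hb z),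
    ebPoles_eq_range]
  rfl

lemma ebMultiplicity_eq_zero (hb : 0 < b) (hz : z ∉ ebPoles b) : ebMultiplicity b z = 0 :=
  not_not.1 fun h => hz ((ebMultiplicity_ne_zero_iff hb).1 h)

lemma ebPole_injective (hirr : Irrational (b ^ 2)) : Function.Injective (ebPole b) := by
  rintro ⟨m, n⟩ ⟨m', n'⟩ h
  have hb : b ≠ 0 := fun h0 => hirr.ne_zero (by simp [h0])
  have hb_sq : ((m - m' : ℤ) : ℝ) * b ^ 2 = (n' - n : ℤ) := by
    have him := congrArg im h
    simp only [im_ebPole] at him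
    field_simp at him
    push_cast
    linarith
  have hm : (m : ℤ) - m' = 0 := by
    by_contra hne
    refine irrational_iff_ne_rational _ |>.1 hirr (n' - n) (m - m') hne ?_
    rw [eq_div_iff (Int.cast_ne_zero.2 hne), mul_comm, hb_sq]
  rw [hm, Int.cast_zero, zero_mul, eq_comm, Int.cast_eq_zero] at hb_sq
  ext <;> lia

lemma ebMultiplicity_eq_one (hirr : Irrational (b ^ 2)) (hz : z ∈ ebPoles b) :
    ebMultiplicity b z = 1 := by
  rw [ebMultiplicity, Set.ncard_preimage_of_injective_subset_range (ebPole_injective hirr)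
    (by simpa [ebPoles_eq_range] using hz), Set.ncard_singleton]

lemma ebShiftFactor_eq_zero_iff (hb : b ≠ 0) :
    ebShiftFactor b z = 0 ↔ ∃ j : ℤ, z = I * ((j + 1 / 2) * (b : ℂ)⁻¹) := by
  have hbc : (b : ℂ) ≠ 0 := ofReal_ne_zero.2 hb
  rw [ebShiftFactor, add_comm, add_eq_zero_iff_eq_neg, ← exp_pi_mul_I,
    Complex.exp_eq_exp_iff_exists_int]
  refine exists_congr fun j => ⟨fun h => ?_, ?_⟩
  · have hpi : (2 * π * b : ℂ) ≠ 0 := by simp [pi_ne_zero, hb]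
    refine mul_left_cancel₀ hpi (h.trans ?_)
    field_simp
    ring
  · rintro rfl
    field_simp
    ring

lemma ebShiftFactor_ne_zero_of_abs_im_lt (hb : 0 < b) (hz : |z.im| < b⁻¹ / 2) :
    ebShiftFactor b z ≠ 0 := by
  rw [Ne, ebShiftFactor_eq_zero_iff hb.ne']
  rintro ⟨j, rfl⟩
  have hinv : 0 < b⁻¹ := inv_pos.2 hb
  have him : (I * ((j + 1 / 2) * (b : ℂ)⁻¹)).im = (j + 1 / 2) * b⁻¹ := by simp
  obtain ⟨hlower, hupper⟩ := abs_lt.1 (him ▸ hz)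
  have hj : (-1 : ℤ) < j := by exact_mod_cast (by nlinarith : (-1 : ℝ) < j)
  have hj' : j < 0 := by exact_mod_cast (by nlinarith : (j : ℝ) < 0)
  lia

lemma im_ne_zero_of_ebShiftFactor_eq_zero (hb : 0 < b) (hz : ebShiftFactor b z = 0) : z.im ≠ 0 :=
  fun h => ebShiftFactor_ne_zero_of_abs_im_lt hb (by simp [h, hb]) hz

lemma ebShiftFactor_neg (b : ℝ) (z : ℂ) :
    ebShiftFactor b (-z) = cexp (-(2 * π * b * z)) * ebShiftFactor b z := by
  rw [ebShiftFactor, ebShiftFactor, mul_add, mul_one, ← Complex.exp_add, neg_add_cancel,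
    Complex.exp_zero, mul_neg, add_comm]

lemma ebShiftFactor_neg_eq_zero_iff : ebShiftFactor b (-z) = 0 ↔ ebShiftFactor b z = 0 := by
  rw [ebShiftFactor_neg, mul_eq_zero, or_iff_right (Complex.exp_ne_zero _)]

lemma ebPole_zero_left_eq_iff {n : ℕ} :
    ebPole b (0, n) = z + I * b / 2 ↔ z = I * ((n + 1 / 2) * (b : ℂ)⁻¹) := by
  have hpole : ebPole b (0, n) = I * ((n + 1 / 2) * (b : ℂ)⁻¹) + I * b / 2 := by
    simp only [ebPole, cb]
    push_cast
    ring
  rw [hpole, add_left_inj, eq_comm]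

open Classical in
lemma ncard_ebPole_zero_left_preimage (hb : 0 < b) (z : ℂ) :
    {n : ℕ | ebPole b (0, n) = z + I * b / 2}.ncard =
      if ebShiftFactor b z = 0 ∧ 0 < z.im then 1 else 0 := by
  have hinv : 0 < b⁻¹ := inv_pos.2 hb
  have him (x : ℝ) : (I * ((x + 1 / 2) * (b : ℂ)⁻¹)).im = (x + 1 / 2) * b⁻¹ := by simp
  simp only [ebPole_zero_left_eq_iff]
  split_ifs with h
  · obtain ⟨⟨j, rfl⟩, hpos⟩ := (ebShiftFactor_eq_zero_iff hb.ne').1 h.1, h.2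
    have hj : -1 < j := by
      have hpos' : 0 < (j + 1 / 2 : ℝ) := pos_of_mul_pos_left (him j ▸ hpos) hinv.le
      exact_mod_cast (by linarith : (-1 : ℝ) < j)
    lift j to ℕ using by lia
    refine Set.ncard_eq_one.2 ⟨j, Set.ext fun n => ?_⟩
    simp [hb.ne', eq_comm]
  · rw [Set.eq_empty_of_forall_notMem (s := {n : ℕ | _}) fun n hn => h ?_, Set.ncard_empty]
    obtain rfl : z = _ := hn
    have hpos : 0 < (n + 1 / 2 : ℝ) * b⁻¹ := by positivity
    exact ⟨(ebShiftFactor_eq_zero_iff hb.ne').2 ⟨n, rfl⟩, by simpa using hpos⟩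

open Classical in
/-- Raising the first index by one translates `ebPole` by `ib`, so only the indices `(0, n)` are
new. -/
lemma ebMultiplicity_add_half_shift (hb : 0 < b) (z : ℂ) :
    ebMultiplicity b (z + I * b / 2) = ebMultiplicity b (z - I * b / 2) +
      if ebShiftFactor b z = 0 ∧ 0 < z.im then 1 else 0 := by
  have hsucc (m n : ℕ) : ebPole b (m + 1, n) = ebPole b (m, n) + I * b := by
    simp only [ebPole]
    push_cast
    ring
  have hsplit : ebPole b ⁻¹' {z + I * b / 2} =
      Prod.map Nat.succ id '' (ebPole b ⁻¹' {z - I * b / 2}) ∪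
        Prod.mk 0 '' {n : ℕ | ebPole b (0, n) = z + I * b / 2} := by
    have hz : z + I * b / 2 = z - I * b / 2 + I * b := by ring
    ext ⟨m, n⟩
    cases m <;> simp [hsucc, hz]
  have hdisjoint : Disjoint (Prod.map Nat.succ id '' (ebPole b ⁻¹' {z - I * b / 2}))
      (Prod.mk 0 '' {n : ℕ | ebPole b (0, n) = z + I * b / 2}) := by
    refine Set.disjoint_left.2 ?_
    rintro _ ⟨p, -, rfl⟩ ⟨n, -, h⟩
    exact absurd (congrArg Prod.fst h) (Nat.succ_ne_zero _).symm
  have hfinite := hsplit ▸ ebPole_preimage_singleton_finite hb (z + I * b / 2)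
  rw [ebMultiplicity, hsplit, Set.ncard_union_eq hdisjoint (hfinite.subset Set.subset_union_left)
    (hfinite.subset Set.subset_union_right),
    Set.ncard_image_of_injective _ (Nat.succ_injective.prodMap Function.injective_id),
    Set.ncard_image_of_injective _ (Prod.mk_right_injective 0),
    ncard_ebPole_zero_left_preimage hb, ebMultiplicity]

lemma analyticAt_ebShiftFactor (b : ℝ) (z : ℂ) : AnalyticAt ℂ (ebShiftFactor b) z := by
  unfold ebShiftFactor
  fun_prop

lemma hasDerivAt_ebShiftFactor (b : ℝ) (z : ℂ) :
    HasDerivAt (ebShiftFactor b) (2 * π * b * cexp (2 * π * b * z)) z :=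
  ((((hasDerivAt_id z).const_mul (2 * π * b : ℂ)).cexp).const_add 1).congr_deriv
    (by simp [mul_comm])

open Classical in
lemma meromorphicOrderAt_ebShiftFactor (hb : b ≠ 0) (z : ℂ) :
    meromorphicOrderAt (ebShiftFactor b) z =
      ((if ebShiftFactor b z = 0 then 1 else 0 : ℤ) : WithTop ℤ) := by
  have hanalytic := analyticAt_ebShiftFactor b z
  split_ifs with h
  · have hderiv : deriv (ebShiftFactor b) z ≠ 0 := by
      rw [(hasDerivAt_ebShiftFactor b z).deriv]
      simp [pi_ne_zero, hb]
    rw [hanalytic.meromorphicOrderAt_eq,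
      hanalytic.analyticOrderAt_eq_one_of_zero_deriv_ne_zero h hderiv]
    rfl
  · exact hanalytic.meromorphicNFAt.meromorphicOrderAt_eq_zero_iff.2 h

lemma eventually_ebShiftFactor_ne_zero (hb : b ≠ 0) (z : ℂ) :
    ∀ᶠ w in 𝓝[≠] z, ebShiftFactor b w ≠ 0 := by
  rw [← meromorphicOrderAt_ne_top_iff_eventually_ne_zero
    (analyticAt_ebShiftFactor b z).meromorphicAt, meromorphicOrderAt_ebShiftFactor hb]
  exact WithTop.coe_ne_top

/-- The order at `z` of the continuation of `e_b`: its zeros are the negatives of its poles. -/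
def ebOrder (b : ℝ) (z : ℂ) : ℤ := ebMultiplicity b (-z) - ebMultiplicity b z

lemma ebOrder_eq_zero (hb : 0 < b) (hz : |z.im| < (b + b⁻¹) / 2) : ebOrder b z = 0 := by
  rw [ebOrder, ebMultiplicity_eq_zero hb (notMem_ebPoles_of_abs_im_lt hb hz),
    ebMultiplicity_eq_zero hb (notMem_ebPoles_of_abs_im_lt hb (by rwa [neg_im, abs_neg])), sub_self]

lemma ebOrder_sub_half_shift (hb : 0 < b) (z : ℂ) :
    (ebOrder b (z - I * b / 2) : WithTop ℤ) =
      meromorphicOrderAt (ebShiftFactor b) z + ebOrder b (z + I * b / 2) := by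
  classical
  have hpos := ebMultiplicity_add_half_shift hb z
  have hneg := ebMultiplicity_add_half_shift hb (-z)
  have him := im_ne_zero_of_ebShiftFactor_eq_zero (z := z) hb
  simp only [ebShiftFactor_neg_eq_zero_iff, neg_im, Left.neg_pos_iff, ← neg_add', neg_add_eq_sub,
    ← neg_sub z] at hneg
  rw [meromorphicOrderAt_ebShiftFactor hb.ne', ebOrder, ebOrder]
  norm_cast
  split_ifs at * <;> grind

end Multiplicities

section OrientedProduct

variable {K : Type*} [Field K]

/-- The product of `g` over `[m, n)`, read as the inverse of the product over `[n, m)` when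
`n < m`. -/
def orientedProd (g : ℤ → K) (m n : ℤ) : K :=
  (∏ k ∈ Finset.Ico m n, g k) * (∏ k ∈ Finset.Ico n m, g k)⁻¹

lemma orientedProd_self (g : ℤ → K) (m : ℤ) : orientedProd g m m = 1 := by
  simp [orientedProd]

lemma orientedProd_add_one_right {g : ℤ → K} {n : ℤ} (hn : g n ≠ 0) (m : ℤ) :
    orientedProd g m (n + 1) = g n * orientedProd g m n := by
  unfold orientedProd
  rcases le_or_gt m n with hmn | hnm
  · rw [← Finset.insert_Ico_right_eq_Ico_add_one hmn, Finset.prod_insert Finset.right_notMem_Ico,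
      Finset.Ico_eq_empty_of_le hmn, Finset.Ico_eq_empty_of_le (b := m) (by lia), mul_assoc]
  · rw [← Finset.insert_Ico_add_one_left_eq_Ico hnm, Finset.prod_insert (by simp),
      Finset.Ico_eq_empty_of_le hnm.le, Finset.Ico_eq_empty_of_le (by lia), mul_inv,
      mul_left_comm, mul_inv_cancel_left₀ hn]

lemma orientedProd_comp_add_one (g : ℤ → K) (m n : ℤ) :
    orientedProd (fun k => g (k + 1)) m n = orientedProd g (m + 1) (n + 1) := by
  simp only [orientedProd, Finset.prod_Ico_add' g]

end OrientedProduct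

section HalfShift

variable {𝕜 : Type*} [NontriviallyNormedField 𝕜] {F φ : 𝕜 → 𝕜} {c z : 𝕜}

lemma meromorphicAt_sub_iff_of_eventually_eq_mul (hφ : MeromorphicAt φ z)
    (hφ0 : ∀ᶠ w in 𝓝[≠] z, φ w ≠ 0)
    (hF : ∀ᶠ w in 𝓝[≠] z, F (w - c) = φ w * F (w + c)) :
    MeromorphicAt F (z - c) ↔ MeromorphicAt F (z + c) := by
  rw [← meromorphicAt_comp_sub_const_iff_meromorphicAt,
    ← meromorphicAt_comp_add_const_iff_meromorphicAt]
  refine ⟨fun h => (hφ.inv.mul h).congr ?_, fun h => (hφ.mul h).congr ?_⟩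
  · filter_upwards [hF, hφ0] with w hw hw0
    simp [hw, hw0]
  · filter_upwards [hF] with w hw
    simp [hw]

lemma meromorphicOrderAt_sub_of_eventually_eq_mul (hφ : MeromorphicAt φ z)
    (hmer : MeromorphicAt F (z + c)) (hF : ∀ᶠ w in 𝓝[≠] z, F (w - c) = φ w * F (w + c)) :
    meromorphicOrderAt F (z - c) = meromorphicOrderAt φ z + meromorphicOrderAt F (z + c) := by
  rw [← meromorphicOrderAt_comp_sub_const_eq_meromorphicOrderAt,
    ← meromorphicOrderAt_comp_add_const_eq_meromorphicOrderAt,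
    ← meromorphicOrderAt_mul hφ (meromorphicAt_comp_add_const_iff_meromorphicAt.2 hmer)]
  exact meromorphicOrderAt_congr hF

end HalfShift

section ShiftExtension

variable {a r : ℝ} {φ f : ℂ → ℂ} {z : ℂ}

/-- The continuation to `ℂ` of the values of `f` on `-a/2 ≤ Im z < a/2` by means of the functional
equation `F(z - ia/2) = φ(z) F(z + ia/2)`. Where this would divide by a zero of `φ` it takes the
junk value `0`. -/
def shiftExtension (a : ℝ) (φ f : ℂ → ℂ) (z : ℂ) : ℂ :=
  orientedProd (fun k => φ (z - I * a * (k + 1 / 2))) (round (z.im / a)) 0 *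
    f (z - I * a * round (z.im / a))

lemma shiftExtension_eq_self (ha : 0 < a) (hz : z.im ∈ Set.Ico (-(a / 2)) (a / 2)) :
    shiftExtension a φ f z = f z := by
  have hround : round (z.im / a) = 0 := by
    rw [round_eq_zero_iff, Set.mem_Ico, le_div_iff₀ ha, div_lt_iff₀ ha]
    constructor <;> linarith [hz.1, hz.2]
  rw [shiftExtension, hround, orientedProd_self, Int.cast_zero, mul_zero, sub_zero, one_mul]

lemma shiftExtension_shift (ha : a ≠ 0) (hz : φ z ≠ 0) :
    shiftExtension a φ f (z - I * a / 2) = φ z * shiftExtension a φ f (z + I * a / 2) := by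
  have him : (I * a / 2 : ℂ).im = a / 2 := by simp
  have hround : round ((z + I * a / 2).im / a) = round ((z - I * a / 2).im / a) + 1 := by
    rw [← round_add_one]
    congr 1
    simp only [add_im, sub_im, him]
    field_simp
    ring
  rw [shiftExtension, shiftExtension, hround]
  generalize round ((z - I * a / 2).im / a) = n
  have hfactor (k : ℤ) : φ (z - I * a / 2 - I * a * (k + 1 / 2)) =
      φ (z + I * a / 2 - I * a * ((k + 1 : ℤ) + 1 / 2)) := by
    push_cast
    ring_nf
  have hfactor_zero : φ (z + I * a / 2 - I * a * ((0 : ℤ) + 1 / 2)) = φ z := by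
    push_cast
    ring_nf
  simp only [hfactor]
  rw [orientedProd_comp_add_one fun k : ℤ => φ (z + I * a / 2 - I * a * (k + 1 / 2)),
    orientedProd_add_one_right (by rwa [hfactor_zero]), hfactor_zero, mul_assoc]
  congr 3
  push_cast
  ring

lemma shift_induction (ha : 0 < a) {P : ℂ → Prop}
    (base : ∀ z : ℂ, z.im ∈ Set.Ico (-(a / 2)) (a / 2) → P z)
    (up : ∀ z : ℂ, 0 ≤ z.im → P (z - I * a / 2) → P (z + I * a / 2))
    (down : ∀ z : ℂ, z.im ≤ 0 → P (z + I * a / 2) → P (z - I * a / 2)) (z : ℂ) : P z := by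
  have him : (I * a / 2 : ℂ).im = a / 2 := by simp
  suffices ∀ n : ℤ, ∀ z : ℂ, z.im - n * a ∈ Set.Ico (-(a / 2)) (a / 2) → P z by
    refine this (round (z.im / a)) z ?_
    obtain ⟨hlower, hupper⟩ := (round_eq_zero_iff (x := z.im / a - round (z.im / a))).1 (by simp)
    rw [le_sub_iff_add_le, le_div_iff₀ ha] at hlower
    rw [sub_lt_iff_lt_add, div_lt_iff₀ ha] at hupper
    constructor <;> linarith
  intro n
  induction n with
  | zero => simpa using base
  | succ n ih =>
    rintro z ⟨hlower, hupper⟩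
    push_cast at hlower hupper
    have hna : 0 ≤ n * a := by positivity
    rw [← sub_add_cancel z (I * a / 2)]
    refine up _ ?_ (ih _ ?_) <;> simp only [sub_im, him, Set.mem_Ico, Int.cast_natCast]
    · linarith
    · constructor <;> linarith
  | pred n ih =>
    rintro z ⟨hlower, hupper⟩
    push_cast at hlower hupper
    have hna : 0 ≤ n * a := by positivity
    rw [← add_sub_cancel_right z (I * a / 2)]
    refine down _ ?_ (ih _ ?_) <;>
      simp only [add_im, him, Set.mem_Ico, Int.cast_neg, Int.cast_natCast]
    · linarith
    · constructor <;> linarith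

lemma shiftExtension_eq_of_abs_im_lt (ha : 0 < a)
    (hshift : ∀ z : ℂ, |z.im| < r → f (z - I * a / 2) = φ z * f (z + I * a / 2))
    (hφ : ∀ z : ℂ, |z.im| < r → φ z ≠ 0) (hz : |z.im| < a / 2 + r) :
    shiftExtension a φ f z = f z := by
  have him : (I * a / 2 : ℂ).im = a / 2 := by simp
  induction z using shift_induction ha with
  | base z hz' => exact shiftExtension_eq_self ha hz'
  | up z h0 ih =>
    rw [add_im, him, abs_lt] at hz
    have hz' : |z.im| < r := abs_lt.2 ⟨by linarith, by linarith⟩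
    have ih := ih (by rw [sub_im, him, abs_lt]; constructor <;> linarith)
    rw [shiftExtension_shift ha.ne' (hφ z hz'), hshift z hz'] at ih
    exact mul_left_cancel₀ (hφ z hz') ih
  | down z h0 ih =>
    rw [sub_im, him, abs_lt] at hz
    have hz' : |z.im| < r := abs_lt.2 ⟨by linarith, by linarith⟩
    have ih := ih (by rw [add_im, him, abs_lt]; constructor <;> linarith)
    rw [shiftExtension_shift ha.ne' (hφ z hz'), hshift z hz', ih]

lemma eventuallyEq_shiftExtension (ha : 0 < a)
    (hshift : ∀ z : ℂ, |z.im| < r → f (z - I * a / 2) = φ z * f (z + I * a / 2))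
    (hφ : ∀ z : ℂ, |z.im| < r → φ z ≠ 0) (hz : |z.im| < a / 2 + r) :
    shiftExtension a φ f =ᶠ[𝓝 z] f :=
  ((isOpen_strip _).eventually_mem hz).mono fun _ => shiftExtension_eq_of_abs_im_lt ha hshift hφ

lemma eventually_shiftExtension_shift (ha : a ≠ 0) (hz : ∀ᶠ w in 𝓝[≠] z, φ w ≠ 0) :
    ∀ᶠ w in 𝓝[≠] z, shiftExtension a φ f (w - I * a / 2) =
      φ w * shiftExtension a φ f (w + I * a / 2) :=
  hz.mono fun _ => shiftExtension_shift ha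

lemma meromorphic_shiftExtension (ha : 0 < a) (hr : 0 < r)
    (hshift : ∀ z : ℂ, |z.im| < r → f (z - I * a / 2) = φ z * f (z + I * a / 2))
    (hφ : ∀ z : ℂ, |z.im| < r → φ z ≠ 0) (hφmer : Meromorphic φ)
    (hφ0 : ∀ z, ∀ᶠ w in 𝓝[≠] z, φ w ≠ 0) (hf : ∀ z : ℂ, |z.im| < a / 2 + r → MeromorphicAt f z) :
    Meromorphic (shiftExtension a φ f) := by
  intro z
  have hiff (z : ℂ) := meromorphicAt_sub_iff_of_eventually_eq_mul (hφmer z) (hφ0 z)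
    (eventually_shiftExtension_shift (f := f) ha.ne' (hφ0 z))
  induction z using shift_induction ha with
  | base z hz =>
    have hz' : |z.im| < a / 2 + r := abs_lt.2 ⟨by linarith [hz.1], by linarith [hz.2]⟩
    exact (hf z hz').congr
      ((eventuallyEq_shiftExtension ha hshift hφ hz').symm.filter_mono nhdsWithin_le_nhds)
  | up z _ ih => exact (hiff z).1 ih
  | down z _ ih => exact (hiff z).2 ih

lemma meromorphicOrderAt_shiftExtension (ha : 0 < a) (hr : 0 < r)
    (hshift : ∀ z : ℂ, |z.im| < r → f (z - I * a / 2) = φ z * f (z + I * a / 2))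
    (hφ : ∀ z : ℂ, |z.im| < r → φ z ≠ 0) (hφmer : Meromorphic φ)
    (hφ0 : ∀ z, ∀ᶠ w in 𝓝[≠] z, φ w ≠ 0) (hf : ∀ z : ℂ, |z.im| < a / 2 + r → MeromorphicAt f z)
    {ν : ℂ → WithTop ℤ} (hν : ∀ z : ℂ, |z.im| < a / 2 + r → meromorphicOrderAt f z = ν z)
    (hν_shift : ∀ z : ℂ, ν (z - I * a / 2) = meromorphicOrderAt φ z + ν (z + I * a / 2)) (z : ℂ) :
    meromorphicOrderAt (shiftExtension a φ f) z = ν z := by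
  have hmer := meromorphic_shiftExtension ha hr hshift hφ hφmer hφ0 hf
  have horder (z : ℂ) := meromorphicOrderAt_sub_of_eventually_eq_mul (hφmer z) (hmer _)
    (eventually_shiftExtension_shift (f := f) ha.ne' (hφ0 z))
  induction z using shift_induction ha with
  | base z hz =>
    have hz' : |z.im| < a / 2 + r := abs_lt.2 ⟨by linarith [hz.1], by linarith [hz.2]⟩
    rw [meromorphicOrderAt_congr
      ((eventuallyEq_shiftExtension ha hshift hφ hz').filter_mono nhdsWithin_le_nhds), hν z hz']
  | up z _ ih =>
    rw [horder, hν_shift] at ih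
    exact WithTop.add_left_cancel
      ((meromorphicOrderAt_ne_top_iff_eventually_ne_zero (hφmer z)).2 (hφ0 z)) ih
  | down z _ ih => rw [horder, hν_shift, ih]

end ShiftExtension

section MeromorphicOrder

variable {𝕜 : Type*} [NontriviallyNormedField 𝕜] {f : 𝕜 → 𝕜} {x : 𝕜}

lemma exists_ne_zero_tendsto_pow_mul_of_meromorphicOrderAt_eq_neg {n : ℕ}
    (hf : MeromorphicAt f x) (hn : meromorphicOrderAt f x = (-n : ℤ)) :
    ∃ c ≠ 0, Tendsto (fun w => (w - x) ^ n * f w) (𝓝[≠] x) (𝓝 c) := by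
  have hpow : MeromorphicAt (fun w => (w - x) ^ n) x := by fun_prop
  refine tendsto_ne_zero_of_meromorphicOrderAt_eq_zero (hpow.mul hf) ?_
  rw [fun_meromorphicOrderAt_mul hpow hf, fun_meromorphicOrderAt_pow_id_sub_const, hn]
  exact_mod_cast add_neg_cancel (n : ℤ)

lemma deriv_ne_zero_of_analyticOrderAt_eq_one [CharZero 𝕜] [CompleteSpace 𝕜]
    (hf : AnalyticAt 𝕜 f x) (hx : analyticOrderAt f x = 1) : deriv f x ≠ 0 := by
  have hzero : f x = 0 := apply_eq_zero_of_analyticOrderAt_ne_zero (by simp [hx])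
  refine hf.deriv.analyticOrderAt_eq_zero.1 ?_
  exact (analyticOrderAt_deriv_eq_iff (n := 0) hf hzero).1 (by simpa using hx)

end MeromorphicOrder

lemma eq_of_eventuallyEq_of_countable {P : Set ℂ} (hP : P.Countable) {f g : ℂ → ℂ} {x z : ℂ}
    (hf : ∀ z ∉ P, AnalyticAt ℂ f z) (hg : ∀ z ∉ P, AnalyticAt ℂ g z) (hx : x ∉ P)
    (hfg : f =ᶠ[𝓝 x] g) (hz : z ∉ P) : f z = g z := by
  have hconn := hP.isConnected_compl_of_one_lt_rank (rank_real_complex ▸ Nat.one_lt_ofNat)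
  exact AnalyticOnNhd.eqOn_of_preconnected_of_eventuallyEq (U := Pᶜ) hf hg hconn.isPreconnected hx
    hfg hz

section Extension

variable {b : ℝ} {f g : ℂ → ℂ} {z : ℂ}

/-- The meromorphic continuation of `e_b` to `ℂ`, in normal form: its value at a point where it is
regular is its limit there, and its value at a pole is the junk value `0`. -/
def ebExt (b : ℝ) : ℂ → ℂ :=
  toMeromorphicNFOn (shiftExtension b (ebShiftFactor b) (eb b)) Set.univ

lemma meromorphicNFAt_ebExt (b : ℝ) (z : ℂ) : MeromorphicNFAt (ebExt b) z :=
  meromorphicNFOn_toMeromorphicNFOn _ _ (Set.mem_univ z)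

lemma meromorphic_shiftExtension_eb (hb : 0 < b) :
    Meromorphic (shiftExtension b (ebShiftFactor b) (eb b)) :=
  meromorphic_shiftExtension hb (half_pos (inv_pos.2 hb)) (fun _ => eb_shift hb)
    (fun _ => ebShiftFactor_ne_zero_of_abs_im_lt hb)
    (fun z => (analyticAt_ebShiftFactor b z).meromorphicAt)
    (eventually_ebShiftFactor_ne_zero hb.ne')
    fun _ hz => (analyticAt_eb hb (by rwa [add_div])).meromorphicAt

lemma meromorphicOrderAt_shiftExtension_eb (hb : 0 < b) (z : ℂ) :
    meromorphicOrderAt (shiftExtension b (ebShiftFactor b) (eb b)) z = ebOrder b z := by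
  refine meromorphicOrderAt_shiftExtension hb (half_pos (inv_pos.2 hb)) (fun _ => eb_shift hb)
    (fun _ => ebShiftFactor_ne_zero_of_abs_im_lt hb)
    (fun z => (analyticAt_ebShiftFactor b z).meromorphicAt)
    (eventually_ebShiftFactor_ne_zero hb.ne')
    (fun z hz => (analyticAt_eb hb (by rwa [add_div])).meromorphicAt)
    (ν := fun z => ebOrder b z) (fun z hz => ?_) (ebOrder_sub_half_shift hb) z
  rw [← add_div] at hz
  rw [ebOrder_eq_zero hb hz]
  exact (analyticAt_eb hb hz).meromorphicNFAt.meromorphicOrderAt_eq_zero_iff.2 (eb_ne_zero b z)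

lemma ebExt_eventuallyEq_shiftExtension (hb : 0 < b) (z : ℂ) :
    ebExt b =ᶠ[𝓝[≠] z] shiftExtension b (ebShiftFactor b) (eb b) :=
  MeromorphicOn.toMeromorphicNFOn_eq_self_on_nhdsNE
    (fun w _ => meromorphic_shiftExtension_eb hb w) (Set.mem_univ z)

lemma meromorphicOrderAt_ebExt (hb : 0 < b) (z : ℂ) :
    meromorphicOrderAt (ebExt b) z = ebOrder b z := by
  rw [meromorphicOrderAt_congr (ebExt_eventuallyEq_shiftExtension hb z),
    meromorphicOrderAt_shiftExtension_eb hb]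

lemma ebExt_eq_eb (hb : 0 < b) (hz : |z.im| < (b + b⁻¹) / 2) : ebExt b z = eb b z := by
  have hshift : shiftExtension b (ebShiftFactor b) (eb b) =ᶠ[𝓝 z] eb b :=
    eventuallyEq_shiftExtension hb (fun _ => eb_shift hb)
      (fun _ => ebShiftFactor_ne_zero_of_abs_im_lt hb) (by rwa [← add_div])
  exact ((meromorphicNFAt_ebExt b z).eventuallyEq_nhdsNE_iff_eventuallyEq_nhds
    (analyticAt_eb hb hz).meromorphicNFAt |>.1 <| (ebExt_eventuallyEq_shiftExtension hb z).trans
    (hshift.filter_mono nhdsWithin_le_nhds)).eq_of_nhds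

lemma analyticAt_ebExt (hb : 0 < b) (hz : z ∉ ebPoles b) : AnalyticAt ℂ (ebExt b) z := by
  rw [← (meromorphicNFAt_ebExt b z).meromorphicOrderAt_nonneg_iff_analyticAt,
    meromorphicOrderAt_ebExt hb, ebOrder, ebMultiplicity_eq_zero hb hz, Nat.cast_zero, sub_zero]
  exact_mod_cast Nat.zero_le _

lemma eq_of_eq_eb_on_strip (hb : 0 < b)
    (hf : ∀ z : ℂ, |z.im| < (b + b⁻¹) / 2 → f z = eb b z)
    (hf' : ∀ z ∉ ebPoles b, AnalyticAt ℂ f z)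
    (hg : ∀ z : ℂ, |z.im| < (b + b⁻¹) / 2 → g z = eb b z)
    (hg' : ∀ z ∉ ebPoles b, AnalyticAt ℂ g z) (hz : z ∉ ebPoles b) : f z = g z := by
  have h0 : |(0 : ℂ).im| < (b + b⁻¹) / 2 := by rw [zero_im, abs_zero]; positivity
  refine eq_of_eventuallyEq_of_countable (countable_ebPoles b) hf' hg'
    (notMem_ebPoles_of_abs_im_lt hb h0) ?_ hz
  filter_upwards [(isOpen_strip _).eventually_mem h0] with w hw
  rw [hf w hw, hg w hw]

lemma ebExt_inv (hb : 0 < b) (hz : z ∉ ebPoles b) : ebExt b⁻¹ z = ebExt b z := by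
  have hb' : 0 < b⁻¹ := inv_pos.2 hb
  refine eq_of_eq_eb_on_strip hb (fun w hw => ?_) (fun w hw => ?_) (fun w hw => ebExt_eq_eb hb hw)
    (fun w hw => analyticAt_ebExt hb hw) hz
  · rw [ebExt_eq_eb hb' (by rwa [inv_inv, add_comm]), eb_inv]
  · exact analyticAt_ebExt hb' (by rwa [ebPoles_inv])

lemma ebExt_shift (hb : 0 < b) (hsub : z - I * b / 2 ∉ ebPoles b)
    (hadd : z + I * b / 2 ∉ ebPoles b) :
    ebExt b (z - I * b / 2) = ebShiftFactor b z * ebExt b (z + I * b / 2) := by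
  have hcont_sub : ContinuousAt (fun w => ebExt b (w - I * b / 2)) z :=
    (analyticAt_ebExt hb hsub).continuousAt.comp (f := fun w => w - I * b / 2) (by fun_prop)
  have hcont_add : ContinuousAt (fun w => ebShiftFactor b w * ebExt b (w + I * b / 2)) z :=
    (analyticAt_ebShiftFactor b z).continuousAt.mul
      ((analyticAt_ebExt hb hadd).continuousAt.comp (f := fun w => w + I * b / 2) (by fun_prop))
  refine ((hcont_sub.eventuallyEq_nhds_iff_eventuallyEq_nhdsNE hcont_add).1 ?_).eq_of_nhds
  have htendsto_sub := ((hasDerivAt_id z).sub_const (I * b / 2)).tendsto_nhdsNE one_ne_zero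
  have htendsto_add := ((hasDerivAt_id z).add_const (I * b / 2)).tendsto_nhdsNE one_ne_zero
  filter_upwards [eventually_ebShiftFactor_ne_zero hb.ne' z,
    htendsto_sub.eventually (ebExt_eventuallyEq_shiftExtension hb _),
    htendsto_add.eventually (ebExt_eventuallyEq_shiftExtension hb _)] with w hw hw_sub hw_add
  simp only [id] at hw_sub hw_add
  rw [hw_sub, hw_add, shiftExtension_shift hb.ne' hw]

lemma ebExt_shift_inv (hb : 0 < b) (hsub : z - I * (b : ℂ)⁻¹ / 2 ∉ ebPoles b)
    (hadd : z + I * (b : ℂ)⁻¹ / 2 ∉ ebPoles b) :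
    ebExt b (z - I * (b : ℂ)⁻¹ / 2) = ebShiftFactor b⁻¹ z * ebExt b (z + I * (b : ℂ)⁻¹ / 2) := by
  have h := ebExt_shift (z := z) (inv_pos.2 hb)
  rw [ebPoles_inv, ofReal_inv] at h
  rw [← ebExt_inv hb hsub, ← ebExt_inv hb hadd, h hsub hadd]

lemma ebExt_eq_zero_iff (hb : 0 < b) (hz : z ∉ ebPoles b) : ebExt b z = 0 ↔ z ∈ ebZeros b := by
  rw [← not_iff_not, ← Ne, ← (meromorphicNFAt_ebExt b z).meromorphicOrderAt_eq_zero_iff,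
    meromorphicOrderAt_ebExt hb, ebOrder, ebMultiplicity_eq_zero hb hz,
    mem_ebZeros_iff_neg_mem_ebPoles, ← ebMultiplicity_ne_zero_iff hb]
  norm_cast
  simp

lemma exists_tendsto_pow_mul_ebExt (hb : 0 < b) (hz : z ∈ ebPoles b) :
    ∃ c ≠ 0, Tendsto (fun w => (w - z) ^ ebMultiplicity b z * ebExt b w) (𝓝[≠] z) (𝓝 c) := by
  refine exists_ne_zero_tendsto_pow_mul_of_meromorphicOrderAt_eq_neg
    (meromorphicNFAt_ebExt b z).meromorphicAt ?_
  have hneg : -z ∉ ebPoles b := fun h =>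
    notMem_ebPoles_of_mem_ebZeros hb (mem_ebZeros_iff_neg_mem_ebPoles.2 h) hz
  rw [meromorphicOrderAt_ebExt hb, ebOrder, ebMultiplicity_eq_zero hb hneg, Nat.cast_zero, zero_sub]

lemma analyticOrderAt_ebExt (hb : 0 < b) (hz : z ∉ ebPoles b) :
    analyticOrderAt (ebExt b) z = ebMultiplicity b (-z) := by
  have h := meromorphicOrderAt_ebExt hb z
  rw [(analyticAt_ebExt hb hz).meromorphicOrderAt_eq, ebOrder, ebMultiplicity_eq_zero hb hz] at h
  rw [Nat.cast_zero, sub_zero] at h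
  cases horder : analyticOrderAt (ebExt b) z with
  | top => simp [horder] at h
  | coe n => simpa [horder] using h

end Extension

theorem statement1_general (b : ℝ) (hb : 0 < b) :
    ∃ f : ℂ → ℂ,
      ((∀ z : ℂ, |z.im| < (b + b⁻¹) / 2 → f z = eb b z) ∧
        (∀ z : ℂ, z ∉ ebPoles b → AnalyticAt ℂ f z) ∧
        (∀ z : ℂ, z - I * b / 2 ∉ ebPoles b → z + I * b / 2 ∉ ebPoles b →
          f (z - I * b / 2) = (1 + cexp (2 * π * b * z)) * f (z + I * b / 2)) ∧
        (∀ z : ℂ, z - I * (b : ℂ)⁻¹ / 2 ∉ ebPoles b → z + I * (b : ℂ)⁻¹ / 2 ∉ ebPoles b →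
          f (z - I * (b : ℂ)⁻¹ / 2) =
            (1 + cexp (2 * π * (b : ℂ)⁻¹ * z)) * f (z + I * (b : ℂ)⁻¹ / 2)) ∧
        (∀ p ∈ ebPoles b, ∃ c : ℂ, c ≠ 0 ∧
          Tendsto (fun w => (w - p) ^ ebMultiplicity b p * f w) (𝓝[≠] p) (𝓝 c)) ∧
        (∀ z : ℂ, z ∉ ebPoles b → (f z = 0 ↔ z ∈ ebZeros b)) ∧
        (∀ z ∈ ebZeros b, analyticOrderAt f z = ebMultiplicity b (-z))) ∧
      (∀ g : ℂ → ℂ,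
        (∀ z : ℂ, |z.im| < (b + b⁻¹) / 2 → g z = eb b z) →
        (∀ z : ℂ, z ∉ ebPoles b → AnalyticAt ℂ g z) →
        ∀ z : ℂ, z ∉ ebPoles b → g z = f z) := by
  refine ⟨ebExt b, ⟨fun _ => ebExt_eq_eb hb, fun _ => analyticAt_ebExt hb,
    fun _ => ebExt_shift hb, fun z hsub hadd => ?_, fun _ => exists_tendsto_pow_mul_ebExt hb,
    fun _ => ebExt_eq_zero_iff hb,
    fun _ hz => analyticOrderAt_ebExt hb (notMem_ebPoles_of_mem_ebZeros hb hz)⟩,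
    fun g hg hg' _ => eq_of_eq_eb_on_strip hb hg hg' (fun _ => ebExt_eq_eb hb)
      fun _ => analyticAt_ebExt hb⟩
  rw [ebExt_shift_inv hb hsub hadd, ebShiftFactor, ofReal_inv]

/-- `e_b` extends uniquely to a meromorphic function on `ℂ` satisfying the
two shift equations, whose poles are exactly the points `c_b + i(mb+nb⁻¹)` (all simple)
and whose zeros are exactly the points `-c_b - i(mb+nb⁻¹)` (all simple). -/
theorem statement1 (b : ℝ) (hb : 0 < b) (hirr : Irrational (b ^ 2)) :
    ∃ f : ℂ → ℂ,
      ((∀ z : ℂ, |z.im| < (b + b⁻¹) / 2 → f z = eb b z) ∧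
        (∀ z : ℂ, z ∉ ebPoles b → AnalyticAt ℂ f z) ∧
        (∀ z : ℂ, z - Complex.I * (b : ℂ) / 2 ∉ ebPoles b →
          z + Complex.I * (b : ℂ) / 2 ∉ ebPoles b →
          f (z - Complex.I * (b : ℂ) / 2) =
            (1 + Complex.exp (2 * (π : ℂ) * (b : ℂ) * z)) * f (z + Complex.I * (b : ℂ) / 2)) ∧
        (∀ z : ℂ, z - Complex.I * (b : ℂ)⁻¹ / 2 ∉ ebPoles b →
          z + Complex.I * (b : ℂ)⁻¹ / 2 ∉ ebPoles b →
          f (z - Complex.I * (b : ℂ)⁻¹ / 2) =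
            (1 + Complex.exp (2 * (π : ℂ) * (b : ℂ)⁻¹ * z)) *
              f (z + Complex.I * (b : ℂ)⁻¹ / 2)) ∧
        (∀ p ∈ ebPoles b, ∃ c : ℂ, c ≠ 0 ∧
          Tendsto (fun w => (w - p) * f w) (𝓝[≠] p) (𝓝 c)) ∧
        (∀ z : ℂ, z ∉ ebPoles b → (f z = 0 ↔ z ∈ ebZeros b)) ∧
        (∀ z ∈ ebZeros b, deriv f z ≠ 0)) ∧
      (∀ g : ℂ → ℂ,
        (∀ z : ℂ, |z.im| < (b + b⁻¹) / 2 → g z = eb b z) →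
        (∀ z : ℂ, z ∉ ebPoles b → AnalyticAt ℂ g z) →
        ∀ z : ℂ, z ∉ ebPoles b → g z = f z) := by
  obtain ⟨f, ⟨hstrip, han, hshift, hshift', hpole, hzero, horder⟩, hunique⟩ :=
    statement1_general b hb
  refine ⟨f, ⟨hstrip, han, hshift, hshift', fun p hp => ?_, hzero, fun z hz => ?_⟩, hunique⟩
  · simpa [ebMultiplicity_eq_one hirr hp] using hpole p hp
  · refine deriv_ne_zero_of_analyticOrderAt_eq_one
      (han z (notMem_ebPoles_of_mem_ebZeros hb hz)) ?_
    rw [horder z hz, ebMultiplicity_eq_one hirr (mem_ebZeros_iff_neg_mem_ebPoles.1 hz)]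
    rfl

end
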